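/- Let G be a weighted directed graph on vertex set V = {1,…,n} and let M_expa be the expander motif with vertices {1,2,3}, edges E_M = {(2,1),(2,3)}, and anchor set A = {1,3}. Then the functional motif adjacency matrix of M_expa in G satisfies M^func = (1/2)·(C + Cᵀ), where C = J_n ∘ (Jᵀ G); equivalently, M^func = (1/2)·J_n ∘ (Jᵀ G + Gᵀ J). -/

import Mathlib

/-!
An instance of the expander motif whose anchored pair is `{i, j}` is determined by the image `k`
of the central vertex: its edge set is `{(k, i), (k, j)}`, and any `k` that sends edges of `G` to
both `i` and `j`, with `i ≠ j`, gives such an instance. This is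
`isFuncInstance_and_anchoredPair_iff`. Distinct centres give distinct instances, so the sum over
instances in the functional MAM becomes the sum over the common in-neighbours `k` of `i` and `j`
of `G k i + G k j` (`sum_instances`). Since `G` is nonnegative with zero diagonal, it vanishes
outside the edge set, so `∑ k, J k i * G k j` is the sum of `G k j` over those same `k`
(`transpose_Jmat_mul_apply`), and the two weights give `C i j` and `C j i`.
-/

open scoped Classical BigOperators Matrix

noncomputable section

/-- A motif on `m` vertices: a weakly connected loopless directed graph on the vertex set
`Fin m`, given by its edge set. -/
structure Motif (m : ℕ) where
  edges : Finset (Fin m × Fin m)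
  irrefl : ∀ e ∈ edges, e.1 ≠ e.2
  connected : (SimpleGraph.fromRel (fun u v => (u, v) ∈ edges)).Connected

variable {n m : ℕ}

/-- Edge set of the weighted directed graph with weight matrix `G`:
`E = {(i,j) : i ≠ j and G i j > 0}`. -/
def edgeFinset (G : Matrix (Fin n) (Fin n) ℝ) : Finset (Fin n × Fin n) :=
  Finset.univ.filter fun p => p.1 ≠ p.2 ∧ 0 < G p.1 p.2

/-- Directed-edge indicator matrix `J`. -/
def Jmat (G : Matrix (Fin n) (Fin n) ℝ) : Matrix (Fin n) (Fin n) ℝ :=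
  fun i j => if (i, j) ∈ edgeFinset G then 1 else 0

/-- Single-edge indicator matrix `J_s`. -/
def Jsmat (G : Matrix (Fin n) (Fin n) ℝ) : Matrix (Fin n) (Fin n) ℝ :=
  fun i j => if (i, j) ∈ edgeFinset G ∧ (j, i) ∉ edgeFinset G then 1 else 0

/-- Double-edge indicator matrix `J_d`. -/
def Jdmat (G : Matrix (Fin n) (Fin n) ℝ) : Matrix (Fin n) (Fin n) ℝ :=
  fun i j => if (i, j) ∈ edgeFinset G ∧ (j, i) ∈ edgeFinset G then 1 else 0

/-- Missing-edge indicator matrix `J_0`. -/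
def J0mat (G : Matrix (Fin n) (Fin n) ℝ) : Matrix (Fin n) (Fin n) ℝ :=
  fun i j => if (i, j) ∉ edgeFinset G ∧ (j, i) ∉ edgeFinset G ∧ i ≠ j then 1 else 0

/-- Vertex-distinct indicator matrix `J_n`. -/
def Jnmat (n : ℕ) : Matrix (Fin n) (Fin n) ℝ :=
  fun i j => if i ≠ j then 1 else 0

/-- Single-edge weighted matrix `G_s`. -/
def Gsmat (G : Matrix (Fin n) (Fin n) ℝ) : Matrix (Fin n) (Fin n) ℝ :=
  fun i j => if (i, j) ∈ edgeFinset G ∧ (j, i) ∉ edgeFinset G then G i j else 0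

/-- Double-edge weighted matrix `G_d`. -/
def Gdmat (G : Matrix (Fin n) (Fin n) ℝ) : Matrix (Fin n) (Fin n) ℝ :=
  fun i j => if (i, j) ∈ edgeFinset G ∧ (j, i) ∈ edgeFinset G then G i j + G j i else 0

/-- Entrywise (Hadamard) product of matrices. -/
def had (A B : Matrix (Fin n) (Fin n) ℝ) : Matrix (Fin n) (Fin n) ℝ :=
  fun i j => A i j * B i j

/-- Well-formedness of a candidate subgraph `H = (V_H, E_H)` of a graph on `Fin n`:
each edge joins two distinct vertices of `H`. -/
def IsGraphPair (H : Finset (Fin n) × Finset (Fin n × Fin n)) : Prop :=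
  ∀ e ∈ H.2, e.1 ∈ H.1 ∧ e.2 ∈ H.1 ∧ e.1 ≠ e.2

/-- `φ` is an isomorphism from the motif `M` onto the graph `H = (V_H, E_H)`. -/
def IsIso (M : Motif m) (H : Finset (Fin n) × Finset (Fin n × Fin n))
    (φ : Fin m → Fin n) : Prop :=
  Function.Injective φ ∧ Finset.image φ Finset.univ = H.1 ∧
    ∀ u v : Fin m, (u, v) ∈ M.edges ↔ (φ u, φ v) ∈ H.2

/-- `H` is a functional instance of motif `M` in the graph with weight matrix `G`,
i.e. `M ≅ H ≤ G`. -/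
def IsFuncInstance (M : Motif m) (G : Matrix (Fin n) (Fin n) ℝ)
    (H : Finset (Fin n) × Finset (Fin n × Fin n)) : Prop :=
  IsGraphPair H ∧ H.2 ⊆ edgeFinset G ∧ ∃ φ, IsIso M H φ

/-- `H` is a structural instance of motif `M` in the graph with weight matrix `G`,
i.e. `M ≅ H < G` (`H` an induced subgraph: `E_H = E ∩ (V_H × V_H)`). -/
def IsStrucInstance (M : Motif m) (G : Matrix (Fin n) (Fin n) ℝ)
    (H : Finset (Fin n) × Finset (Fin n × Fin n)) : Prop :=
  IsGraphPair H ∧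
    H.2 = (edgeFinset G).filter (fun e => e.1 ∈ H.1 ∧ e.2 ∈ H.1) ∧
    ∃ φ, IsIso M H φ

/-- `{i, j}` is an anchored pair of the instance `H`: there is an isomorphism `φ` from
`M` to `H` and distinct anchors `a, b ∈ A` with `φ a = i` and `φ b = j`. -/
def AnchoredPair (M : Motif m) (A : Finset (Fin m))
    (H : Finset (Fin n) × Finset (Fin n × Fin n)) (i j : Fin n) : Prop :=
  ∃ φ, IsIso M H φ ∧ ∃ a ∈ A, ∃ b ∈ A, a ≠ b ∧ φ a = i ∧ φ b = j

/-- The functional motif adjacency matrix of the motif `(M, A)` in the graph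
with weight matrix `G`. -/
def mamFunc (M : Motif m) (A : Finset (Fin m)) (G : Matrix (Fin n) (Fin n) ℝ) :
    Matrix (Fin n) (Fin n) ℝ :=
  fun i j => (1 / (M.edges.card : ℝ)) *
    ∑ H : Finset (Fin n) × Finset (Fin n × Fin n),
      if IsFuncInstance M G H ∧ AnchoredPair M A H i j then ∑ e ∈ H.2, G e.1 e.2 else 0

/-- The structural motif adjacency matrix of the motif `(M, A)` in the graph
with weight matrix `G`. -/
def mamStruc (M : Motif m) (A : Finset (Fin m)) (G : Matrix (Fin n) (Fin n) ℝ) :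
    Matrix (Fin n) (Fin n) ℝ :=
  fun i j => (1 / (M.edges.card : ℝ)) *
    ∑ H : Finset (Fin n) × Finset (Fin n × Fin n),
      if IsStrucInstance M G H ∧ AnchoredPair M A H i j then ∑ e ∈ H.2, G e.1 e.2 else 0

/-- The expander with centre `k` and ends `i`, `j`, as a candidate subgraph. -/
def expander (i j k : Fin n) : Finset (Fin n) × Finset (Fin n × Fin n) :=
  ({i, k, j}, {(k, i), (k, j)})

/-- The common in-neighbours of `i` and `j` in the graph of `G`. -/
def centres (G : Matrix (Fin n) (Fin n) ℝ) (i j : Fin n) : Finset (Fin n) :=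
  Finset.univ.filter fun k => (k, i) ∈ edgeFinset G ∧ (k, j) ∈ edgeFinset G

theorem centres_comm (G : Matrix (Fin n) (Fin n) ℝ) (i j : Fin n) :
    centres G i j = centres G j i := by
  simp only [centres, and_comm]

theorem expander_comm (i j k : Fin n) : expander i j k = expander j i k := by
  simp only [expander, Prod.mk.injEq]
  constructor
  · ext x; simp only [Finset.mem_insert, Finset.mem_singleton]; tauto
  · exact Finset.pair_comm _ _

theorem expander_injective (i j : Fin n) : Function.Injective (expander i j) := by
  intro k k' h
  have hk : (k, i) ∈ (expander i j k').2 := by rw [← h]; simp [expander]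
  simp only [expander, Finset.mem_insert, Finset.mem_singleton, Prod.mk.injEq] at hk
  tauto

/-- A graph isomorphic to the expander motif is the expander on the images of its vertices:
every edge joins vertices in the image of `φ`, hence comes from a motif edge. -/
theorem eq_expander_of_isIso {M : Motif 3} (hM : M.edges = {((1 : Fin 3), 0), (1, 2)})
    {H : Finset (Fin n) × Finset (Fin n × Fin n)} (hH : IsGraphPair H)
    {φ : Fin 3 → Fin n} (hφ : IsIso M H φ) : H = expander (φ 0) (φ 2) (φ 1) := by
  obtain ⟨-, himg, hedge⟩ := hφ
  refine Prod.ext ?_ ?_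
  · rw [← himg]
    ext x
    simp [expander, Fin.exists_fin_succ, eq_comm]
  · ext ⟨x, y⟩
    simp only [expander, Finset.mem_insert, Finset.mem_singleton, Prod.mk.injEq]
    constructor
    · intro he
      obtain ⟨hx, hy, -⟩ := hH _ he
      rw [← himg] at hx hy
      obtain ⟨u, -, rfl⟩ := Finset.mem_image.1 hx
      obtain ⟨v, -, rfl⟩ := Finset.mem_image.1 hy
      have huv := (hedge u v).2 he
      simp only [hM, Finset.mem_insert, Finset.mem_singleton, Prod.mk.injEq] at huv
      rcases huv with ⟨rfl, rfl⟩ | ⟨rfl, rfl⟩ <;> simp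
    · rintro (⟨rfl, rfl⟩ | ⟨rfl, rfl⟩)
      · exact (hedge 1 0).1 (by simp [hM])
      · exact (hedge 1 2).1 (by simp [hM])

theorem isIso_expander {M : Motif 3} (hM : M.edges = {((1 : Fin 3), 0), (1, 2)})
    {i j k : Fin n} (hij : i ≠ j) (hki : k ≠ i) (hkj : k ≠ j) :
    IsIso M (expander i j k) ![i, k, j] := by
  refine ⟨?_, ?_, ?_⟩
  · intro u v h
    fin_cases u <;> fin_cases v <;> simp_all
  · ext x
    simp [expander, Fin.exists_fin_succ, eq_comm]
  · intro u v
    rw [hM]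
    fin_cases u <;> fin_cases v <;> simp [expander, hij, hki, hkj, hij.symm, hki.symm, hkj.symm]

/-- The functional instances anchored at `{i, j}` are exactly the expanders centred at a common
in-neighbour of `i` and `j`. -/
theorem isFuncInstance_and_anchoredPair_iff {M : Motif 3}
    (hM : M.edges = {((1 : Fin 3), 0), (1, 2)}) (G : Matrix (Fin n) (Fin n) ℝ) {i j : Fin n}
    (hij : i ≠ j) (H : Finset (Fin n) × Finset (Fin n × Fin n)) :
    IsFuncInstance M G H ∧ AnchoredPair M {0, 2} H i j ↔
      H ∈ (centres G i j).image (expander i j) := by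
  simp only [Finset.mem_image, centres, Finset.mem_filter, Finset.mem_univ, true_and]
  constructor
  · rintro ⟨⟨hpair, hsub, -⟩, φ, hφ, a, ha, b, hb, hab, rfl, rfl⟩
    have hH := eq_expander_of_isIso hM hpair hφ
    have h0 : (φ 1, φ 0) ∈ edgeFinset G := hsub (by rw [hH]; simp [expander])
    have h2 : (φ 1, φ 2) ∈ edgeFinset G := hsub (by rw [hH]; simp [expander])
    simp only [Finset.mem_insert, Finset.mem_singleton] at ha hb
    rcases ha with rfl | rfl <;> rcases hb with rfl | rfl
    · exact absurd rfl hab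
    · exact ⟨φ 1, ⟨h0, h2⟩, hH.symm⟩
    · exact ⟨φ 1, ⟨h2, h0⟩, by rw [expander_comm, ← hH]⟩
    · exact absurd rfl hab
  · rintro ⟨k, ⟨hi, hj⟩, rfl⟩
    have hki : k ≠ i := (Finset.mem_filter.1 hi).2.1
    have hkj : k ≠ j := (Finset.mem_filter.1 hj).2.1
    have hiso := isIso_expander hM hij hki hkj
    refine ⟨⟨?_, ?_, _, hiso⟩, _, hiso, 0, by simp, 2, by simp, by decide, by simp, by simp⟩
    · intro e he
      simp only [expander, Finset.mem_insert, Finset.mem_singleton] at he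
      rcases he with rfl | rfl <;> simp [expander, hki, hkj]
    · intro e he
      simp only [expander, Finset.mem_insert, Finset.mem_singleton] at he
      rcases he with rfl | rfl <;> assumption

theorem sum_instances {M : Motif 3} (hM : M.edges = {((1 : Fin 3), 0), (1, 2)})
    (G : Matrix (Fin n) (Fin n) ℝ) {i j : Fin n} (hij : i ≠ j) :
    (∑ H : Finset (Fin n) × Finset (Fin n × Fin n),
      if IsFuncInstance M G H ∧ AnchoredPair M {0, 2} H i j then ∑ e ∈ H.2, G e.1 e.2 else 0) =
      ∑ k ∈ centres G i j, (G k i + G k j) := by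
  simp only [isFuncInstance_and_anchoredPair_iff hM G hij]
  rw [← Finset.sum_filter, Finset.filter_mem_eq_inter, Finset.univ_inter,
    Finset.sum_image (expander_injective i j).injOn]
  refine Finset.sum_congr rfl fun k _ => ?_
  exact Finset.sum_pair (by simp [hij])

theorem transpose_Jmat_mul_apply (G : Matrix (Fin n) (Fin n) ℝ)
    (hpos : ∀ i j, 0 ≤ G i j) (hdiag : ∀ i, G i i = 0) (i j : Fin n) :
    ((Jmat G)ᵀ * G) i j = ∑ k ∈ centres G i j, G k j := by
  rw [Matrix.mul_apply, centres, Finset.sum_filter]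
  refine Finset.sum_congr rfl fun k _ => ?_
  -- A non-edge `(k, j)` has `k = j` or `G k j ≤ 0`, so its weight is zero.
  have hzero : (k, j) ∉ edgeFinset G → G k j = 0 := by
    intro h
    simp only [edgeFinset, Finset.mem_filter, Finset.mem_univ, true_and, not_and, not_lt] at h
    by_cases hkj : k = j
    · rw [hkj, hdiag]
    · exact le_antisymm (h hkj) (hpos k j)
  by_cases h1 : (k, i) ∈ edgeFinset G <;> by_cases h2 : (k, j) ∈ edgeFinset G <;>
    simp [Jmat, Matrix.transpose_apply, h1, h2, hzero]

/-- On the diagonal there is no anchored pair, because isomorphisms are injective. -/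
theorem not_anchoredPair_self {m : ℕ} (M : Motif m) (A : Finset (Fin m))
    (H : Finset (Fin n) × Finset (Fin n × Fin n)) (i : Fin n) : ¬ AnchoredPair M A H i i := by
  rintro ⟨φ, hφ, a, -, b, -, hab, ha, hb⟩
  exact hab (hφ.1 (ha.trans hb.symm))

/-- **Functional MAM formula for the expander motif.** -/
theorem mam_expander_func
    (G : Matrix (Fin n) (Fin n) ℝ)
    (hpos : ∀ i j, 0 ≤ G i j) (hdiag : ∀ i, G i i = 0)
    (Mexpa : Motif 3) (hM : Mexpa.edges = {((1 : Fin 3), 0), (1, 2)})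
    (A : Finset (Fin 3)) (hA : A = {0, 2}) :
    mamFunc Mexpa A G =
      (1 / 2 : ℝ) • (had (Jnmat n) ((Jmat G)ᵀ * G) + (had (Jnmat n) ((Jmat G)ᵀ * G))ᵀ) ∧
    mamFunc Mexpa A G =
      (1 / 2 : ℝ) • had (Jnmat n) ((Jmat G)ᵀ * G + Gᵀ * Jmat G) := by
  have key : mamFunc Mexpa A G =
      (1 / 2 : ℝ) •
        (had (Jnmat n) ((Jmat G)ᵀ * G) + (had (Jnmat n) ((Jmat G)ᵀ * G))ᵀ) := by
    have hcard : (Mexpa.edges.card : ℝ) = 2 := by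
      rw [hM, Finset.card_pair (by decide)]; norm_num
    subst hA
    ext i j
    simp only [mamFunc, hcard, Matrix.smul_apply, Matrix.add_apply, Matrix.transpose_apply, had,
      Jnmat, smul_eq_mul]
    congr 1
    by_cases hij : i = j
    · subst hij
      simp [not_anchoredPair_self]
    · rw [sum_instances hM G hij, transpose_Jmat_mul_apply G hpos hdiag i j,
        transpose_Jmat_mul_apply G hpos hdiag j i, centres_comm G j i, Finset.sum_add_distrib,
        if_pos hij, if_pos (Ne.symm hij)]
      ring
  refine ⟨key, key.trans ?_⟩
  -- `Gᵀ J` is the transpose of `Jᵀ G`, and `J_n` is symmetric.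
  have htr : Gᵀ * Jmat G = ((Jmat G)ᵀ * G)ᵀ := by
    rw [Matrix.transpose_mul, Matrix.transpose_transpose]
  rw [htr]
  ext i j
  simp only [Matrix.smul_apply, Matrix.add_apply, Matrix.transpose_apply, had, Jnmat, smul_eq_mul,
    ne_comm (a := j) (b := i)]
  ring
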